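/- arXiv:0803.0675 — 5 statements merged into one kernel-verified Lean document; each statement's English description precedes it below -/
import Mathlib

section
/- Let χ : ℝ → ℝ be a smooth function with χ(r) = 1 for 0 ≤ r ≤ 1/3 and χ(r) = 0 for r ≥ 2/3, and let γ denote the Euler–Mascheroni constant. Then there exist constants C > 0 and μ₀ > 0 such that for all real μ ≥ μ₀, | ∫₀^∞ χ(r) r^{−1} (1 − e^{−rμ}) dr − [ ln μ + γ + ∫₀^1 (χ(r) − 1) r^{−1} dr ] | ≤ C e^{−μ/4}. -/
open MeasureTheory Real

/-!
On `(0, 1)` split `χ(r) r⁻¹ (1 - e^{-rμ})` into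
`(1 - e^{-rμ}) r⁻¹ + (χ(r) - 1) r⁻¹ - (χ(r) - 1) r⁻¹ e^{-rμ}`.
The first term integrates to `Ein μ = log μ + γ + E₁ μ`, where `0 ≤ E₁ μ ≤ e^{-μ} / μ`; the second
integrates to the regularized integral; the third is `O(e^{-aμ})` when `χ = 1` on `(0, a)`.

The constant in `Ein` comes from `Γ'(1) = ∫₀^∞ log t e^{-t} dt = -γ`, since
`(1 - e^{-x}) log x - Ein x` is the antiderivative of `log x e^{-x}` vanishing at `0⁺`.
-/

open Filter Set Topology

section LogExpIntegral

lemma hasDerivAt_complexGamma_integral {s : ℂ} (hs : 0 < s.re) :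
    HasDerivAt Complex.Gamma
      (∫ t in Ioi (0 : ℝ), (t : ℂ) ^ (s - 1) * (Real.log t * Real.exp (-t))) s := by
  refine (Complex.hasDerivAt_GammaIntegral hs).congr_of_eventuallyEq ?_
  filter_upwards [(isOpen_lt continuous_const Complex.continuous_re).mem_nhds hs] with z hz
  exact Complex.Gamma_eq_integral hz

lemma integral_log_mul_exp_neg_Ioi :
    ∫ t in Ioi (0 : ℝ), log t * exp (-t) = -eulerMascheroniConstant := by
  have hderiv := (hasDerivAt_complexGamma_integral (s := 1) (by simp)).unique
    Complex.hasDerivAt_Gamma_one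
  simp only [sub_self, Complex.cpow_zero, one_mul, ← Complex.ofReal_mul,
    integral_complex_ofReal] at hderiv
  exact_mod_cast hderiv

lemma integrableOn_log_mul_exp_neg_Ioi :
    IntegrableOn (fun t ↦ log t * exp (-t)) (Ioi (0 : ℝ)) := by
  refine Integrable.of_integral_ne_zero ?_
  rw [integral_log_mul_exp_neg_Ioi]
  linarith [one_half_lt_eulerMascheroniConstant]

end LogExpIntegral

section ExponentialIntegral

lemma one_sub_exp_neg_mem_Icc {x : ℝ} (hx : 0 ≤ x) : 1 - exp (-x) ∈ Icc 0 x :=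
  ⟨sub_nonneg.2 (exp_le_one_iff.2 (neg_nonpos.2 hx)), by linarith [one_sub_le_exp_neg x]⟩

lemma norm_one_sub_exp_neg_mul_inv_le_one {t : ℝ} (ht : 0 ≤ t) :
    ‖(1 - exp (-t)) * t⁻¹‖ ≤ 1 := by
  obtain ⟨hnonneg, hle⟩ := one_sub_exp_neg_mem_Icc ht
  rw [norm_of_nonneg (mul_nonneg hnonneg (inv_nonneg.2 ht)), ← div_eq_mul_inv]
  exact div_le_one_of_le₀ hle ht

lemma intervalIntegrable_one_sub_exp_neg_mul_inv {x : ℝ} (hx : 0 ≤ x) :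
    IntervalIntegrable (fun t ↦ (1 - exp (-t)) * t⁻¹) volume 0 x := by
  refine (intervalIntegrable_const (c := (1 : ℝ))).mono_fun'
    (Measurable.aestronglyMeasurable (by fun_prop)) ?_
  filter_upwards [ae_restrict_mem measurableSet_uIoc] with t ht
  rw [uIoc_of_le hx] at ht
  exact norm_one_sub_exp_neg_mul_inv_le_one ht.1.le

/-- The complementary exponential integral `Ein x = ∫₀ˣ (1 - e^{-t}) / t dt`. -/
noncomputable def einIntegral (x : ℝ) : ℝ := ∫ t in (0 : ℝ)..x, (1 - exp (-t)) * t⁻¹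

/-- The exponential integral `E₁ x = ∫ₓ^∞ e^{-t} / t dt`, meaningful for `0 < x`. -/
noncomputable def expIntegralE₁ (x : ℝ) : ℝ := ∫ t in Ioi x, exp (-t) * t⁻¹

lemma norm_einIntegral_le {x : ℝ} (hx : 0 ≤ x) : ‖einIntegral x‖ ≤ x := by
  have hbound : ∀ t ∈ uIoc 0 x, ‖(1 - exp (-t)) * t⁻¹‖ ≤ 1 := fun t ht ↦
    norm_one_sub_exp_neg_mul_inv_le_one (uIoc_of_le hx ▸ ht).1.le
  simpa only [einIntegral, sub_zero, one_mul, abs_of_nonneg hx] using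
    intervalIntegral.norm_integral_le_of_norm_le_const hbound

lemma hasDerivAt_einIntegral {x : ℝ} (hx : 0 < x) :
    HasDerivAt einIntegral ((1 - exp (-x)) * x⁻¹) x := by
  have hx_ne : x ≠ 0 := hx.ne'
  exact intervalIntegral.integral_hasDerivAt_right
    (intervalIntegrable_one_sub_exp_neg_mul_inv hx.le)
    (Measurable.stronglyMeasurable (by fun_prop)).stronglyMeasurableAtFilter
    (by fun_prop (disch := assumption))

lemma integral_one_sub_exp_neg_mul_mul_inv {c : ℝ} (hc : c ≠ 0) (x : ℝ) :
    ∫ r in (0 : ℝ)..x, (1 - exp (-(r * c))) * r⁻¹ = einIntegral (x * c) := by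
  have hscale := intervalIntegral.mul_integral_comp_mul_right (a := 0) (b := x)
    (f := fun t ↦ (1 - exp (-t)) * t⁻¹) c
  rw [zero_mul, ← intervalIntegral.integral_const_mul] at hscale
  rw [einIntegral, ← hscale]
  congr with r
  field_simp

lemma intervalIntegrable_one_sub_exp_neg_mul_mul_inv {c x : ℝ} (hc : 0 < c) (hx : 0 ≤ x) :
    IntervalIntegrable (fun r ↦ (1 - exp (-(r * c))) * r⁻¹) volume 0 x := by
  have hscale := ((intervalIntegrable_one_sub_exp_neg_mul_inv
    (mul_nonneg hx hc.le)).comp_mul_right (c := c)).const_mul c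
  rw [zero_div, mul_div_cancel_right₀ x hc.ne'] at hscale
  refine hscale.congr fun r _ ↦ ?_
  field_simp

lemma hasDerivAt_one_sub_exp_neg_mul_log_sub_einIntegral {x : ℝ} (hx : 0 < x) :
    HasDerivAt (fun x ↦ (1 - exp (-x)) * log x - einIntegral x) (log x * exp (-x)) x := by
  have hfactor : HasDerivAt (fun x : ℝ ↦ 1 - exp (-x)) (exp (-x)) x := by
    simpa using ((hasDerivAt_id x).neg.exp).const_sub 1
  exact ((hfactor.mul (hasDerivAt_log hx.ne')).sub (hasDerivAt_einIntegral hx)).congr_deriv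
    (by ring)

lemma tendsto_one_sub_exp_neg_mul_log_nhdsGT_zero :
    Tendsto (fun x ↦ (1 - exp (-x)) * log x) (𝓝[>] 0) (𝓝 0) := by
  have hmul_log : Tendsto (fun x : ℝ ↦ ‖x * log x‖) (𝓝[>] 0) (𝓝 0) := by
    simpa using (continuous_mul_log.norm.tendsto 0).mono_left nhdsWithin_le_nhds
  refine squeeze_zero_norm' ?_ hmul_log
  filter_upwards [self_mem_nhdsWithin] with x (hx : 0 < x)
  obtain ⟨hnonneg, hle⟩ := one_sub_exp_neg_mem_Icc hx.le
  rw [norm_mul, norm_mul, norm_of_nonneg hnonneg, norm_of_nonneg hx.le]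
  gcongr

lemma tendsto_einIntegral_nhdsGT_zero : Tendsto einIntegral (𝓝[>] 0) (𝓝 0) := by
  refine squeeze_zero_norm' ?_ (tendsto_id.mono_left nhdsWithin_le_nhds)
  filter_upwards [self_mem_nhdsWithin] with x hx
  exact norm_einIntegral_le (le_of_lt hx)

lemma intervalIntegral_log_mul_exp_neg {x : ℝ} (hx : 0 < x) :
    ∫ t in (0 : ℝ)..x, log t * exp (-t) = (1 - exp (-x)) * log x - einIntegral x := by
  have hint : IntervalIntegrable (fun t ↦ log t * exp (-t)) volume 0 x :=
    (intervalIntegrable_iff_integrableOn_Ioc_of_le hx.le).2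
      (integrableOn_log_mul_exp_neg_Ioi.mono_set Ioc_subset_Ioi_self)
  have hzero := tendsto_one_sub_exp_neg_mul_log_nhdsGT_zero.sub tendsto_einIntegral_nhdsGT_zero
  have hend := (hasDerivAt_one_sub_exp_neg_mul_log_sub_einIntegral hx).continuousAt.tendsto
  rw [intervalIntegral.integral_eq_sub_of_hasDerivAt_of_tendsto hx
    (fun t ht ↦ hasDerivAt_one_sub_exp_neg_mul_log_sub_einIntegral ht.1) hint hzero
    (hend.mono_left nhdsWithin_le_nhds), sub_zero, sub_zero]

lemma tendsto_log_mul_exp_neg_atTop : Tendsto (fun x ↦ log x * exp (-x)) atTop (𝓝 0) :=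
  (isLittleO_log_id_atTop.isBigO.mul (Asymptotics.isBigO_refl _ _)).trans_tendsto
    (by simpa using tendsto_pow_mul_exp_neg_atTop_nhds_zero 1)

lemma tendsto_einIntegral_sub_log_atTop :
    Tendsto (fun x ↦ einIntegral x - log x) atTop (𝓝 eulerMascheroniConstant) := by
  have hint := intervalIntegral_tendsto_integral_Ioi 0 integrableOn_log_mul_exp_neg_Ioi tendsto_id
  rw [integral_log_mul_exp_neg_Ioi] at hint
  have hlim := (hint.add tendsto_log_mul_exp_neg_atTop).neg
  rw [add_zero, neg_neg] at hlim
  refine hlim.congr' ?_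
  filter_upwards [eventually_gt_atTop 0] with x hx
  rw [id, intervalIntegral_log_mul_exp_neg hx]
  ring

lemma norm_exp_neg_mul_inv_le {x t : ℝ} (hx : 0 < x) (ht : x < t) :
    ‖exp (-t) * t⁻¹‖ ≤ exp (-t) * x⁻¹ := by
  have ht_pos : 0 < t := hx.trans ht
  rw [norm_of_nonneg (by positivity)]
  gcongr

lemma integrableOn_exp_neg_mul_inv_Ioi {x : ℝ} (hx : 0 < x) :
    IntegrableOn (fun t ↦ exp (-t) * t⁻¹) (Ioi x) := by
  refine ((integrableOn_exp_neg_Ioi x).mul_const x⁻¹).mono'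
    (Measurable.aestronglyMeasurable (by fun_prop)) ?_
  filter_upwards [ae_restrict_mem measurableSet_Ioi] with t ht
  exact norm_exp_neg_mul_inv_le hx ht

lemma norm_expIntegralE₁_le {x : ℝ} (hx : 0 < x) : ‖expIntegralE₁ x‖ ≤ x⁻¹ * exp (-x) := by
  have hbound : ∀ᵐ t ∂volume.restrict (Ioi x), ‖exp (-t) * t⁻¹‖ ≤ exp (-t) * x⁻¹ := by
    filter_upwards [ae_restrict_mem measurableSet_Ioi] with t ht
    exact norm_exp_neg_mul_inv_le hx ht
  calc ‖expIntegralE₁ x‖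
      ≤ ∫ t in Ioi x, exp (-t) * x⁻¹ :=
        norm_integral_le_of_norm_le ((integrableOn_exp_neg_Ioi x).mul_const x⁻¹) hbound
    _ = x⁻¹ * exp (-x) := by rw [integral_mul_const, integral_exp_neg_Ioi, mul_comm]

theorem einIntegral_eq_log_add_eulerMascheroniConstant_add_expIntegralE₁ {x : ℝ} (hx : 0 < x) :
    einIntegral x = log x + eulerMascheroniConstant + expIntegralE₁ x := by
  have hderiv : ∀ t ∈ Ici x,
      HasDerivAt (fun t ↦ einIntegral t - log t) (-(exp (-t) * t⁻¹)) t := fun t ht ↦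
    have ht_pos : 0 < t := hx.trans_le ht
    ((hasDerivAt_einIntegral ht_pos).sub (hasDerivAt_log ht_pos.ne')).congr_deriv (by ring)
  have hFTC := integral_Ioi_of_hasDerivAt_of_tendsto' hderiv
    (integrableOn_exp_neg_mul_inv_Ioi hx).neg tendsto_einIntegral_sub_log_atTop
  rw [integral_neg, ← expIntegralE₁] at hFTC
  linarith

end ExponentialIntegral

section LaplaceTail

variable {ν : Measure ℝ} {g : ℝ → ℝ} {a μ : ℝ}

lemma ae_norm_mul_exp_neg_mul_le (hg : ∀ᵐ r ∂ν, r < a → g r = 0) (hμ : 0 ≤ μ) :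
    ∀ᵐ r ∂ν, ‖g r * exp (-(r * μ))‖ ≤ ‖g r‖ * exp (-(a * μ)) := by
  filter_upwards [hg] with r hr
  rcases lt_or_ge r a with hra | har
  · simp [hr hra]
  · rw [norm_mul, norm_of_nonneg (exp_pos _).le]
    gcongr

lemma integrable_mul_exp_neg_mul (hint : Integrable g ν) (hg : ∀ᵐ r ∂ν, r < a → g r = 0)
    (hμ : 0 ≤ μ) : Integrable (fun r ↦ g r * exp (-(r * μ))) ν :=
  (hint.norm.mul_const _).mono'
    (hint.aestronglyMeasurable.mul (Measurable.aestronglyMeasurable (by fun_prop)))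
    (ae_norm_mul_exp_neg_mul_le hg hμ)

lemma norm_integral_mul_exp_neg_mul_le (hint : Integrable g ν) (hg : ∀ᵐ r ∂ν, r < a → g r = 0)
    (hμ : 0 ≤ μ) :
    ‖∫ r, g r * exp (-(r * μ)) ∂ν‖ ≤ (∫ r, ‖g r‖ ∂ν) * exp (-(a * μ)) := by
  rw [← integral_mul_const]
  exact norm_integral_le_of_norm_le (hint.norm.mul_const _) (ae_norm_mul_exp_neg_mul_le hg hμ)

end LaplaceTail

section Cutoff

variable {χ : ℝ → ℝ} {a b : ℝ}

lemma integrableOn_sub_one_mul_inv (ha : 0 < a) (hχ : ContinuousOn χ (Icc a b))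
    (hχ1 : ∀ r, 0 < r → r < a → χ r = 1) :
    IntegrableOn (fun r ↦ (χ r - 1) * r⁻¹) (Ioo 0 b) := by
  have hnear : IntegrableOn (fun r ↦ (χ r - 1) * r⁻¹) (Ioo 0 a) :=
    integrableOn_zero.congr_fun (fun r hr ↦ by simp [hχ1 r hr.1 hr.2]) measurableSet_Ioo
  have haway : IntegrableOn (fun r ↦ (χ r - 1) * r⁻¹) (Icc a b) :=
    ((hχ.sub continuousOn_const).mul
      (continuousOn_inv₀.mono fun r hr ↦ (ha.trans_le hr.1).ne')).integrableOn_Icc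
  refine (hnear.union haway).mono_set fun r hr ↦ ?_
  exact (lt_or_ge r a).imp (fun hra ↦ ⟨hr.1, hra⟩) fun har ↦ ⟨har, hr.2.le⟩

lemma ae_restrict_sub_one_mul_inv_eq_zero (hχ1 : ∀ r, 0 < r → r < a → χ r = 1) :
    ∀ᵐ r ∂volume.restrict (Ioo 0 b), r < a → (χ r - 1) * r⁻¹ = 0 := by
  filter_upwards [ae_restrict_mem measurableSet_Ioo] with r hr hra
  rw [hχ1 r hr.1 hra, sub_self, zero_mul]

lemma integral_cutoff_mul_inv_mul_one_sub_exp_neg {μ : ℝ} (hμ : 0 < μ)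
    (hint : IntegrableOn (fun r ↦ (χ r - 1) * r⁻¹) (Ioo 0 1)) (hχ0 : ∀ r, 1 ≤ r → χ r = 0) :
    ∫ r in Ioi (0 : ℝ), χ r * r⁻¹ * (1 - exp (-(r * μ))) =
      einIntegral μ + (∫ r in Ioo (0 : ℝ) 1, (χ r - 1) * r⁻¹) -
        ∫ r in Ioo (0 : ℝ) 1, (χ r - 1) * r⁻¹ * exp (-(r * μ)) := by
  have hein_int : IntegrableOn (fun r ↦ (1 - exp (-(r * μ))) * r⁻¹) (Ioo 0 1) :=
    (intervalIntegrable_iff_integrableOn_Ioo_of_le zero_le_one).1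
      (intervalIntegrable_one_sub_exp_neg_mul_mul_inv hμ zero_le_one)
  have hein : ∫ r in Ioo (0 : ℝ) 1, (1 - exp (-(r * μ))) * r⁻¹ = einIntegral μ := by
    rw [← integral_Ioc_eq_integral_Ioo, ← intervalIntegral.integral_of_le zero_le_one,
      integral_one_sub_exp_neg_mul_mul_inv hμ.ne', one_mul]
  have hnonneg : ∀ᵐ r ∂volume.restrict (Ioo 0 1), r < 0 → (χ r - 1) * r⁻¹ = 0 := by
    filter_upwards [ae_restrict_mem measurableSet_Ioo] with r hr hr_neg
    exact absurd hr.1 hr_neg.not_gt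
  have htail_int := integrable_mul_exp_neg_mul hint hnonneg hμ.le
  have hvanish : ∀ r ∈ Ioi (0 : ℝ) \ Ioo 0 1, χ r * r⁻¹ * (1 - exp (-(r * μ))) = 0 := by
    rintro r ⟨hr_pos, hr⟩
    rw [hχ0 r (not_lt.1 fun hr1 ↦ hr ⟨hr_pos, hr1⟩), zero_mul, zero_mul]
  rw [setIntegral_eq_of_subset_of_forall_sdiff_eq_zero measurableSet_Ioi Ioo_subset_Ioi_self
    hvanish, ← hein, ← integral_add hein_int hint,
    ← integral_sub (by exact hein_int.add hint) htail_int]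
  congr with r
  ring

end Cutoff

theorem stmt_5_general {χ : ℝ → ℝ} {a μ : ℝ} (hμ : 0 < μ)
    (hint : IntegrableOn (fun r ↦ (χ r - 1) * r⁻¹) (Ioo 0 1))
    (hχ1 : ∀ r, 0 < r → r < a → χ r = 1) (hχ0 : ∀ r, 1 ≤ r → χ r = 0) :
    |(∫ r in Ioi (0 : ℝ), χ r * r⁻¹ * (1 - exp (-(r * μ)))) -
        (log μ + eulerMascheroniConstant + ∫ r in Ioo (0 : ℝ) 1, (χ r - 1) * r⁻¹)|
      ≤ (μ⁻¹ + ∫ r in Ioo (0 : ℝ) 1, ‖(χ r - 1) * r⁻¹‖) * exp (-(a * μ)) := by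
  have ha : a ≤ 1 := by
    by_contra! ha
    exact one_ne_zero ((hχ1 1 one_pos ha).symm.trans (hχ0 1 le_rfl))
  have hE₁ : ‖expIntegralE₁ μ‖ ≤ μ⁻¹ * exp (-(a * μ)) :=
    (norm_expIntegralE₁_le hμ).trans (by gcongr; exact mul_le_of_le_one_left hμ.le ha)
  have htail := norm_integral_mul_exp_neg_mul_le hint
    (ae_restrict_sub_one_mul_inv_eq_zero hχ1) hμ.le
  rw [integral_cutoff_mul_inv_mul_one_sub_exp_neg hμ hint hχ0,
    einIntegral_eq_log_add_eulerMascheroniConstant_add_expIntegralE₁ hμ, add_mul]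
  rw [norm_eq_abs, abs_le] at hE₁ htail
  exact abs_le.2 ⟨by linarith, by linarith⟩

/-- Large-`μ` expansion of `∫₀^∞ χ(r) r^{-1} (1 - e^{-rμ}) dr`: the borderline case `α = 1`,
where a logarithmic term `ln μ` appears. -/
theorem stmt_5 (χ : ℝ → ℝ) (hχ : ContDiff ℝ (⊤ : ℕ∞) χ)
    (hχ1 : ∀ r : ℝ, 0 ≤ r → r ≤ 1 / 3 → χ r = 1)
    (hχ0 : ∀ r : ℝ, 2 / 3 ≤ r → χ r = 0) :
    ∃ C μ₀ : ℝ, 0 < C ∧ 0 < μ₀ ∧ ∀ μ : ℝ, μ₀ ≤ μ →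
      |(∫ r in Set.Ioi (0 : ℝ), χ r * r⁻¹ * (1 - Real.exp (-(r * μ)))) -
          (Real.log μ + Real.eulerMascheroniConstant +
            ∫ r in Set.Ioo (0 : ℝ) 1, (χ r - 1) * r⁻¹)|
        ≤ C * Real.exp (-μ / 4) := by
  have hone : ∀ r, 0 < r → r < 1 / 3 → χ r = 1 := fun r hr h ↦ hχ1 r hr.le h.le
  refine ⟨1 + ∫ r in Ioo (0 : ℝ) 1, ‖(χ r - 1) * r⁻¹‖, 1, by positivity, one_pos, fun μ hμ ↦ ?_⟩
  refine (stmt_5_general (one_pos.trans_le hμ)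
    (integrableOn_sub_one_mul_inv (by norm_num) hχ.continuous.continuousOn hone) hone
    fun r hr ↦ hχ0 r (by linarith)).trans ?_
  gcongr
  · exact inv_le_one_of_one_le₀ hμ
  · linarith
end

section
/- Let μ > 0 be a fixed real number and let γ denote the Euler–Mascheroni constant. Then the limit as α → 1 (over complex α ≠ 1) of 1/(1−α) − μ^{α−1} Γ(1−α) equals ln μ + γ. -/
open Filter Real Complex

open scoped Topology

/-! Since `s Γ(s) = Γ(s + 1)`, the difference `f(s) Γ(s) - f(0) / s` is the difference quotient
at `0` of `f(s) Γ(s + 1)`, so its limit is read off from the product rule and `Γ'(1) = -γ`. For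
`f(s) = exp(-c s)` and `s = 1 - α`, with `c` any logarithm of `μ`, the factor `f(s)` is the power
`μ^(α - 1)`. -/

theorem hasDerivAt_mul_Gamma_add_one {f : ℂ → ℂ} {f' : ℂ} (hf : HasDerivAt f f' 0) :
    HasDerivAt (fun s => f s * Complex.Gamma (s + 1)) (f' - f 0 * eulerMascheroniConstant) 0 := by
  have hΓ : HasDerivAt (fun s => Complex.Gamma (s + 1)) (-eulerMascheroniConstant : ℂ) 0 :=
    HasDerivAt.comp_add_const 0 1 (by simpa only [zero_add] using Complex.hasDerivAt_Gamma_one)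
  refine (hf.mul hΓ).congr_deriv ?_
  rw [zero_add, Complex.Gamma_one]
  ring

theorem tendsto_mul_Gamma_sub_div {f : ℂ → ℂ} {f' : ℂ} (hf : HasDerivAt f f' 0) :
    Tendsto (fun s => f s * Complex.Gamma s - f 0 / s) (𝓝[≠] 0)
      (𝓝 (f' - f 0 * eulerMascheroniConstant)) := by
  refine (hasDerivAt_mul_Gamma_add_one hf).tendsto_slope.congr' ?_
  filter_upwards [self_mem_nhdsWithin] with s (hs : s ≠ 0)
  rw [slope_def_field, Complex.Gamma_add_one s hs, zero_add, Complex.Gamma_one]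
  field_simp
  ring

theorem stmt_6_general (c : ℂ) :
    Tendsto (fun α : ℂ => 1 / (1 - α) - Complex.exp ((α - 1) * c) * Complex.Gamma (1 - α))
      (𝓝[≠] 1) (𝓝 (c + eulerMascheroniConstant)) := by
  have hexp : HasDerivAt (fun s : ℂ => Complex.exp (-s * c)) (-c) 0 := by
    simpa using ((hasDerivAt_neg (0 : ℂ)).mul_const c).cexp
  have hlim : Tendsto (fun s => 1 / s - Complex.exp (-s * c) * Complex.Gamma s) (𝓝[≠] 0)
      (𝓝 (c + eulerMascheroniConstant)) := by
    simpa [add_comm] using (tendsto_mul_Gamma_sub_div hexp).neg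
  have hsub : Tendsto (fun α : ℂ => 1 - α) (𝓝[≠] 1) (𝓝[≠] 0) := by
    simpa using ((hasDerivAt_id (1 : ℂ)).const_sub 1).tendsto_nhdsNE (by simp)
  simpa only [Function.comp_def, neg_sub] using hlim.comp hsub

/-- As `α → 1` (over complex `α ≠ 1`), `1/(1-α) - μ^{α-1} Γ(1-α) → ln μ + γ`. -/
theorem stmt_6 (μ : ℝ) (hμ : 0 < μ) :
    Filter.Tendsto
      (fun α : ℂ =>
        1 / (1 - α) - Complex.exp ((α - 1) * (Real.log μ : ℂ)) * Complex.Gamma (1 - α))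
      (nhdsWithin 1 {(1 : ℂ)}ᶜ)
      (nhds ((Real.log μ : ℂ) + (Real.eulerMascheroniConstant : ℂ))) :=
  stmt_6_general (Real.log μ)
end

section
/- Define erf(x) := (2/√π) ∫₀^x e^{−v²} dv for x ≥ 0. Let α ∈ ℂ with Re(α) < 1. Then ∫₀^∞ (1 − erf(s)) s^{−α} ds = Γ((2−α)/2) / ((1−α)·√π). -/
open MeasureTheory Real intervalIntegral

/-!
Write `1 - erf s = (2/√π) ∫_s^∞ e^{-v²} dv`. By Fubini on the triangle `0 < t < v`, the Mellin
transform at `s` of a tail integral `t ↦ ∫_t^∞ f` is `1/s` times the Mellin transform of `f` at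
`s + 1`. With `s = 1 - α` this leaves the Mellin transform of the Gaussian at `2 - α`, which the
substitution `x = v²` reduces to Euler's integral for `Γ`.
-/

open Set

theorem aestronglyMeasurable_restrict_Ioi_of_forall_Ioo {β : Type*} [TopologicalSpace β]
    [TopologicalSpace.PseudoMetrizableSpace β] {μ : Measure ℝ} {a : ℝ} {f : ℝ → β}
    (hf : ∀ b, AEStronglyMeasurable f (μ.restrict (Ioo a b))) :
    AEStronglyMeasurable f (μ.restrict (Ioi a)) := by
  have hcover : Ioi a = ⋃ n : ℕ, Ioo a (n : ℝ) := by
    ext t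
    simp [exists_nat_gt t]
  rw [hcover, aestronglyMeasurable_iUnion_iff]
  exact fun n => hf n

section Triangle

variable {𝕜 E : Type*} [RCLike 𝕜] [NormedAddCommGroup E] [NormedSpace 𝕜 E]
  {μ ν : Measure ℝ} {a : ℝ} {g : ℝ → 𝕜} {f : ℝ → E}

/-- The product kernel `(t, v) ↦ g t • f v` cut off to the triangle `t < v`, to which Fubini's
theorem is applied in order to exchange `∫ t, g t • ∫ v > t, f v`. -/
noncomputable def triangleKernel (g : ℝ → 𝕜) (f : ℝ → E) (t v : ℝ) : E :=
  {p : ℝ × ℝ | p.1 < p.2}.indicator (fun p => g p.1 • f p.2) (t, v)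

theorem triangleKernel_eq_indicator_Ioi (t : ℝ) :
    triangleKernel g f t = (Ioi t).indicator fun v => g t • f v := rfl

theorem triangleKernel_eq_indicator_Iio (v : ℝ) :
    (fun t => triangleKernel g f t v) = (Iio v).indicator fun t => g t • f v := rfl

theorem norm_triangleKernel (v : ℝ) :
    (fun t => ‖triangleKernel g f t v‖) = (Iio v).indicator fun t => ‖g t‖ * ‖f v‖ := by
  ext t
  rw [congrFun (triangleKernel_eq_indicator_Iio v) t, norm_indicator_eq_indicator_norm]
  simp only [norm_smul]

theorem integrable_triangleKernel [SFinite μ] [SFinite ν]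
    (hg : ∀ v, IntegrableOn g (Ioo a v) μ) (hf : AEStronglyMeasurable f (ν.restrict (Ioi a)))
    (hgf : IntegrableOn (fun v => (∫ t in Ioo a v, ‖g t‖ ∂μ) * ‖f v‖) (Ioi a) ν) :
    Integrable (Function.uncurry (triangleKernel g f))
      ((μ.restrict (Ioi a)).prod (ν.restrict (Ioi a))) := by
  have hg_meas : AEStronglyMeasurable g (μ.restrict (Ioi a)) :=
    aestronglyMeasurable_restrict_Ioi_of_forall_Ioo fun v => (hg v).aestronglyMeasurable
  have hmeas : AEStronglyMeasurable (Function.uncurry (triangleKernel g f))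
      ((μ.restrict (Ioi a)).prod (ν.restrict (Ioi a))) :=
    (hg_meas.comp_fst.smul hf.comp_snd).indicator (measurableSet_lt measurable_fst measurable_snd)
  refine (integrable_prod_iff' hmeas).2 ⟨ae_of_all _ fun v => ?_, ?_⟩
  · simp only [Function.uncurry_apply_pair]
    rw [triangleKernel_eq_indicator_Iio, integrable_indicator_iff measurableSet_Iio, IntegrableOn,
      Measure.restrict_restrict measurableSet_Iio, Iio_inter_Ioi]
    exact (hg v).smul_const (f v)
  · refine hgf.congr (ae_of_all _ fun v => ?_)
    simp only [Function.uncurry_apply_pair]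
    rw [norm_triangleKernel, setIntegral_indicator measurableSet_Iio, Ioi_inter_Iio,
      MeasureTheory.integral_mul_const]

variable [NormedSpace ℝ E]

theorem setIntegral_triangleKernel_right [SMulCommClass ℝ 𝕜 E] {t : ℝ} (ht : a ≤ t) :
    ∫ v in Ioi a, triangleKernel g f t v ∂ν = g t • ∫ v in Ioi t, f v ∂ν := by
  rw [triangleKernel_eq_indicator_Ioi, setIntegral_indicator measurableSet_Ioi, Ioi_inter_Ioi,
    sup_eq_right.2 ht, MeasureTheory.integral_smul]

theorem setIntegral_triangleKernel_left [CompleteSpace E] (v : ℝ) :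
    ∫ t in Ioi a, triangleKernel g f t v ∂μ = (∫ t in Ioo a v, g t ∂μ) • f v := by
  rw [triangleKernel_eq_indicator_Iio, setIntegral_indicator measurableSet_Iio, Ioi_inter_Iio,
    _root_.integral_smul_const]

theorem integrableOn_smul_setIntegral_Ioi [SMulCommClass ℝ 𝕜 E] [SFinite μ] [SFinite ν]
    (hg : ∀ v, IntegrableOn g (Ioo a v) μ) (hf : AEStronglyMeasurable f (ν.restrict (Ioi a)))
    (hgf : IntegrableOn (fun v => (∫ t in Ioo a v, ‖g t‖ ∂μ) * ‖f v‖) (Ioi a) ν) :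
    IntegrableOn (fun t => g t • ∫ v in Ioi t, f v ∂ν) (Ioi a) μ :=
  (integrableOn_congr_fun (fun _ ht => setIntegral_triangleKernel_right ht.le)
    measurableSet_Ioi).1 (integrable_triangleKernel hg hf hgf).integral_prod_left

theorem setIntegral_smul_setIntegral_Ioi [SMulCommClass ℝ 𝕜 E] [CompleteSpace E] [SFinite μ]
    [SFinite ν] (hg : ∀ v, IntegrableOn g (Ioo a v) μ)
    (hf : AEStronglyMeasurable f (ν.restrict (Ioi a)))
    (hgf : IntegrableOn (fun v => (∫ t in Ioo a v, ‖g t‖ ∂μ) * ‖f v‖) (Ioi a) ν) :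
    ∫ t in Ioi a, g t • ∫ v in Ioi t, f v ∂ν ∂μ =
      ∫ v in Ioi a, (∫ t in Ioo a v, g t ∂μ) • f v ∂ν := by
  calc ∫ t in Ioi a, g t • ∫ v in Ioi t, f v ∂ν ∂μ
      = ∫ t in Ioi a, ∫ v in Ioi a, triangleKernel g f t v ∂ν ∂μ :=
        setIntegral_congr_fun measurableSet_Ioi fun _ ht =>
          (setIntegral_triangleKernel_right ht.le).symm
    _ = ∫ v in Ioi a, ∫ t in Ioi a, triangleKernel g f t v ∂μ ∂ν :=
        integral_integral_swap (integrable_triangleKernel hg hf hgf)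
    _ = ∫ v in Ioi a, (∫ t in Ioo a v, g t ∂μ) • f v ∂ν := by
        simp only [setIntegral_triangleKernel_left]

end Triangle

section Mellin

variable {E : Type*} [NormedAddCommGroup E] [NormedSpace ℂ E] {f : ℝ → E} {s : ℂ}

theorem aestronglyMeasurable_of_mellinConvergent (hf : MellinConvergent f s) :
    AEStronglyMeasurable f (volume.restrict (Ioi 0)) := by
  have hpow : ContinuousOn (fun t : ℝ => (t : ℂ) ^ (s - 1)) (Ioi 0) := fun t ht =>
    (Complex.continuousAt_ofReal_cpow_const t _ (Or.inr (ne_of_gt ht))).continuousWithinAt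
  have hpow_ne : ∀ t ∈ Ioi (0 : ℝ), (t : ℂ) ^ (s - 1) ≠ 0 := fun t ht => by
    simp [Complex.cpow_eq_zero_iff, ne_of_gt (mem_Ioi.1 ht)]
  refine (((hpow.inv₀ hpow_ne).aestronglyMeasurable measurableSet_Ioi).smul
    hf.aestronglyMeasurable).congr ?_
  filter_upwards [ae_restrict_mem measurableSet_Ioi] with t ht
  exact inv_smul_smul₀ (hpow_ne t ht) (f t)

theorem integrableOn_Ioo_zero_cpow_sub_one (hs : 0 < s.re) (v : ℝ) :
    IntegrableOn (fun t : ℝ => (t : ℂ) ^ (s - 1)) (Ioo 0 v) :=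
  (intervalIntegrable_cpow' (by simpa using hs)).1.mono_set Ioo_subset_Ioc_self

theorem setIntegral_Ioo_zero_cpow_sub_one (hs : 0 < s.re) {v : ℝ} (hv : 0 ≤ v) :
    ∫ t : ℝ in Ioo 0 v, (t : ℂ) ^ (s - 1) = (v : ℂ) ^ s / s := by
  have hs_ne : s ≠ 0 := by rintro rfl; simp at hs
  rw [← integral_Ioc_eq_integral_Ioo, ← integral_of_le hv, integral_cpow (by simp [hs])]
  simp [Complex.zero_cpow hs_ne]

theorem setIntegral_Ioo_zero_norm_cpow_sub_one (hs : 0 < s.re) {v : ℝ} (hv : 0 ≤ v) :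
    ∫ t : ℝ in Ioo 0 v, ‖(t : ℂ) ^ (s - 1)‖ = v ^ s.re / s.re := by
  have hnorm : EqOn (fun t : ℝ => ‖(t : ℂ) ^ (s - 1)‖) (fun t => t ^ (s.re - 1)) (Ioo 0 v) :=
    fun t ht => by simp [Complex.norm_cpow_eq_rpow_re_of_pos ht.1]
  rw [setIntegral_congr_fun measurableSet_Ioo hnorm, ← integral_Ioc_eq_integral_Ioo,
    ← integral_of_le hv, integral_rpow (by simp [hs])]
  simp [Real.zero_rpow hs.ne']

theorem hasMellin_setIntegral_Ioi [CompleteSpace E] (hs : 0 < s.re)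
    (hf : MellinConvergent f (s + 1)) :
    HasMellin (fun t => ∫ v in Ioi t, f v) s (s⁻¹ • mellin f (s + 1)) := by
  have hpow := integrableOn_Ioo_zero_cpow_sub_one hs
  have hf_meas := aestronglyMeasurable_of_mellinConvergent hf
  have hbound : IntegrableOn
      (fun v => (∫ t : ℝ in Ioo 0 v, ‖(t : ℂ) ^ (s - 1)‖) * ‖f v‖) (Ioi 0) := by
    refine (hf.norm.div_const s.re).congr ?_
    filter_upwards [ae_restrict_mem measurableSet_Ioi] with v hv
    rw [setIntegral_Ioo_zero_norm_cpow_sub_one hs hv.le, add_sub_cancel_right, norm_smul,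
      Complex.norm_cpow_eq_rpow_re_of_pos hv, div_mul_eq_mul_div]
  refine ⟨integrableOn_smul_setIntegral_Ioi hpow hf_meas hbound, ?_⟩
  rw [mellin, setIntegral_smul_setIntegral_Ioi hpow hf_meas hbound, mellin,
    ← MeasureTheory.integral_smul]
  refine setIntegral_congr_fun measurableSet_Ioi fun v hv => ?_
  simp only [setIntegral_Ioo_zero_cpow_sub_one hs hv.le, add_sub_cancel_right, smul_smul,
    div_eq_inv_mul]

theorem hasMellin_exp_neg (hs : 0 < s.re) :
    HasMellin (fun t : ℝ => (Real.exp (-t) : ℂ)) s (Complex.Gamma s) := by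
  refine ⟨?_, ?_⟩
  · simpa only [MellinConvergent, smul_eq_mul, mul_comm] using Complex.GammaIntegral_convergent hs
  · rw [Complex.Gamma_eq_integral hs, Complex.GammaIntegral_eq_mellin]

theorem hasMellin_exp_neg_rpow {p : ℝ} (hs : 0 < (s / p).re) :
    HasMellin (fun t : ℝ => (Real.exp (-t ^ p) : ℂ)) s (|p|⁻¹ • Complex.Gamma (s / p)) := by
  have hp : p ≠ 0 := by rintro rfl; simp at hs
  obtain ⟨hconv, hval⟩ := hasMellin_exp_neg hs
  exact ⟨(MellinConvergent.comp_rpow hp).2 hconv,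
    (mellin_comp_rpow (fun t : ℝ => (Real.exp (-t) : ℂ)) s p).trans (congrArg _ hval)⟩

end Mellin

theorem hasMellin_gaussian {s : ℂ} (hs : 0 < s.re) :
    HasMellin (fun t : ℝ => (Real.exp (-t ^ 2) : ℂ)) s (Complex.Gamma (s / 2) / 2) := by
  have h := hasMellin_exp_neg_rpow (s := s) (p := 2) (by simpa using hs)
  simpa [div_eq_inv_mul] using h

theorem hasMellin_setIntegral_Ioi_gaussian {s : ℂ} (hs : 0 < s.re) :
    HasMellin (fun t => ((∫ v in Ioi t, Real.exp (-v ^ 2) : ℝ) : ℂ)) s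
      (Complex.Gamma ((s + 1) / 2) / (2 * s)) := by
  obtain ⟨hconv, hval⟩ := hasMellin_gaussian (s := s + 1) (by simp; linarith)
  have htail := hasMellin_setIntegral_Ioi hs hconv
  simp only [hval, integral_complex_ofReal] at htail
  convert htail using 1
  rw [smul_eq_mul, div_mul_eq_div_div, inv_mul_eq_div]

theorem one_sub_two_div_sqrt_pi_mul_integral_gaussian (x : ℝ) :
    1 - 2 / √π * ∫ v in (0 : ℝ)..x, Real.exp (-v ^ 2) =
      2 / √π * ∫ v in Ioi x, Real.exp (-v ^ 2) := by
  have hint : Integrable fun v : ℝ => Real.exp (-v ^ 2) := by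
    simpa using integrable_exp_neg_mul_sq one_pos
  have hhalf : ∫ v in Ioi (0 : ℝ), Real.exp (-v ^ 2) = √π / 2 := by
    simpa using integral_gaussian_Ioi 1
  have hsplit := integral_interval_add_Ioi (a := 0) (b := x) hint.integrableOn hint.integrableOn
  rw [hhalf] at hsplit
  rw [eq_sub_iff_add_eq'.2 hsplit]
  field_simp

/-- For `Re α < 1`, `∫₀^∞ (1 - erf s) s^{-α} ds = Γ((2-α)/2)/((1-α)√π)`,
where `erf x = (2/√π) ∫₀^x e^{-v²} dv`. -/
theorem stmt_8 (erf : ℝ → ℝ)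
    (herf : ∀ x : ℝ, 0 ≤ x → erf x = (2 / Real.sqrt π) * ∫ v in (0 : ℝ)..x, Real.exp (-v ^ 2))
    (α : ℂ) (hα : α.re < 1) :
    ∫ s in Set.Ioi (0 : ℝ), ((1 - erf s : ℝ) : ℂ) * (s : ℂ) ^ (-α) =
      Complex.Gamma ((2 - α) / 2) / ((1 - α) * (Real.sqrt π : ℂ)) := by
  have hre : 0 < (1 - α).re := by simpa using hα
  have hgamma := (hasMellin_setIntegral_Ioi_gaussian hre).2
  rw [show 1 - α + 1 = 2 - α by ring] at hgamma
  calc ∫ s in Ioi (0 : ℝ), ((1 - erf s : ℝ) : ℂ) * (s : ℂ) ^ (-α)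
      = mellin (fun s => (2 / √π : ℂ) • ((∫ v in Ioi s, Real.exp (-v ^ 2) : ℝ) : ℂ)) (1 - α) := by
        refine setIntegral_congr_fun measurableSet_Ioi fun s hs => ?_
        simp only [herf s (le_of_lt hs), one_sub_two_div_sqrt_pi_mul_integral_gaussian,
          sub_sub_cancel_left, smul_eq_mul, mul_comm (_ ^ (-α)), Complex.ofReal_mul,
          Complex.ofReal_div, Complex.ofReal_ofNat]
    _ = (2 / √π : ℂ) * (Complex.Gamma ((2 - α) / 2) / (2 * (1 - α))) := by
        rw [mellin_const_smul, hgamma, smul_eq_mul]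
    _ = Complex.Gamma ((2 - α) / 2) / ((1 - α) * √π) := by field_simp
end

section
/- Define u(r,t) := (2/√π) ∫₀^{r/(2√t)} e^{−v²} dv for r ≥ 0, t > 0. Let 0 < ε < 1 and let Θ : ℝ → ℝ be a smooth function with Θ(r) = 1 for 0 ≤ r ≤ ε and Θ(r) = 0 for r ≥ 1, and let γ denote the Euler–Mascheroni constant. Then there exist constants C > 0 and t₀ > 0 such that for all 0 < t < t₀, | ∫₀^1 u(r,t) Θ(r) r^{−1} dr − [ ln ε + ∫_ε^1 Θ(r) r^{−1} dr + γ/2 − (1/2) ln t ] | ≤ C e^{−ε²/(8t)}. -/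
open MeasureTheory Real intervalIntegral

/-! Write `u(r,t) = erf (r / (2√t))` and put `A = ε / (2√t)`. On `(ε, 1)` the factor `erf` differs
from `1` by at most a constant times `exp (-A²)`. On `(0, ε)`, where `Θ = 1`, rescaling gives
`∫₀^A erf x / x dx`; integration by parts against `log` turns it into
`log A - ∫₀^∞ (2/√π) exp (-x²) log x dx` up to a Gaussian tail, and the log-moment of the Gaussian
is `Γ'(1/2) / 4`, which produces `γ`. -/

section Primitive

variable {g : ℝ → ℝ}

lemma continuous_dslope_primitive (hg : Continuous g) :
    Continuous (dslope (fun x => ∫ v in (0 : ℝ)..x, g v) 0) := by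
  have hderiv (x : ℝ) : HasDerivAt (fun x => ∫ v in (0 : ℝ)..x, g v) (g x) x :=
    (hg.integral_hasStrictDerivAt 0 x).hasDerivAt
  rw [← continuousOn_univ, continuousOn_dslope Filter.univ_mem]
  exact ⟨fun x _ => (hderiv x).continuousAt.continuousWithinAt, (hderiv 0).differentiableAt⟩

lemma intervalIntegrable_primitive_div (hg : Continuous g) (a b : ℝ) :
    IntervalIntegrable (fun x => (∫ v in (0 : ℝ)..x, g v) / x) volume a b := by
  refine ((continuous_dslope_primitive hg).intervalIntegrable a b).congr_ae
    (ae_restrict_of_ae ?_)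
  filter_upwards [Measure.ae_ne volume (0 : ℝ)] with x hx
  simp [dslope_of_ne _ hx, slope_def_field]

lemma continuous_primitive_mul_log (hg : Continuous g) :
    Continuous fun x => (∫ v in (0 : ℝ)..x, g v) * log x := by
  refine ((continuous_dslope_primitive hg).mul continuous_mul_log).congr fun x => ?_
  have h := sub_smul_dslope (fun x => ∫ v in (0 : ℝ)..x, g v) 0 x
  simp only [sub_zero, integral_same, smul_eq_mul] at h
  rw [← h, Pi.mul_apply]
  ring

lemma integral_primitive_div (hg : Continuous g) (A : ℝ) :
    ∫ x in (0 : ℝ)..A, (∫ v in (0 : ℝ)..x, g v) / x =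
      (∫ v in (0 : ℝ)..A, g v) * log A - ∫ x in (0 : ℝ)..A, g x * log x := by
  have hlog : IntervalIntegrable (fun x => g x * log x) volume 0 A :=
    intervalIntegrable_log'.continuousOn_mul hg.continuousOn
  have hdiv := intervalIntegrable_primitive_div hg 0 A
  have hFTC := integral_eq_of_hasDerivAt_off_countable
    (fun x => (∫ v in (0 : ℝ)..x, g v) * log x)
    (fun x => g x * log x + (∫ v in (0 : ℝ)..x, g v) / x) (Set.countable_singleton 0)
    (continuous_primitive_mul_log hg).continuousOn
    (fun x hx => (hg.integral_hasStrictDerivAt 0 x).hasDerivAt.mul (hasDerivAt_log hx.2))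
    (hlog.add hdiv)
  rw [intervalIntegral.integral_add hlog hdiv, integral_same, zero_mul, sub_zero] at hFTC
  exact eq_sub_of_add_eq' hFTC

lemma integral_primitive_div_eq_add_integral_Ioi (hg : Continuous g)
    (hint : IntegrableOn g (Set.Ioi 0)) (hlog : IntegrableOn (fun x => g x * log x) (Set.Ioi 0))
    {A : ℝ} (hA : 0 ≤ A) :
    ∫ x in (0 : ℝ)..A, (∫ v in (0 : ℝ)..x, g v) / x =
      (∫ x in Set.Ioi 0, g x) * log A - (∫ x in Set.Ioi 0, g x * log x) +
        ∫ x in Set.Ioi A, g x * (log x - log A) := by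
  have hintA := hint.mono_set (Set.Ioi_subset_Ioi hA)
  have hlogA := hlog.mono_set (Set.Ioi_subset_Ioi hA)
  simp only [mul_sub]
  rw [integral_primitive_div hg, ← integral_interval_add_Ioi hint hintA,
    ← integral_interval_add_Ioi hlog hlogA, MeasureTheory.integral_sub hlogA (hintA.mul_const _),
    MeasureTheory.integral_mul_const]
  ring

end Primitive

section GaussianLogMoment

lemma hasDerivAt_Gamma_integral {s : ℝ} (hs : 0 < s) :
    HasDerivAt Gamma (∫ t in Set.Ioi 0, t ^ (s - 1) * (log t * exp (-t))) s := by
  have hGamma : HasDerivAt Complex.Gamma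
      ((∫ t in Set.Ioi 0, t ^ (s - 1) * (log t * exp (-t)) : ℝ) : ℂ) s := by
    convert! (Complex.hasDerivAt_GammaIntegral (s := s)
      (by simpa using hs)).congr_of_eventuallyEq ?_ using 1
    · rw [← integral_complex_ofReal]
      refine setIntegral_congr_fun measurableSet_Ioi fun t (ht : 0 < t) => ?_
      push_cast [Complex.ofReal_cpow ht.le]
      rfl
    · filter_upwards [(isOpen_lt continuous_const Complex.continuous_re).mem_nhds
        (show (0 : ℝ) < (s : ℂ).re by simpa using hs)] with z hz
      exact Complex.Gamma_eq_integral hz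
  simpa [Complex.Gamma_ofReal] using hGamma.real_of_complex

lemma integral_exp_neg_rpow_mul_log {p : ℝ} (hp : 0 < p) :
    ∫ x in Set.Ioi (0 : ℝ), exp (-x ^ p) * log x = deriv Gamma (1 / p) / p ^ 2 := by
  have hsubst := integral_comp_rpow_Ioi_of_pos
    (g := fun t => t ^ (1 / p - 1) * (log t * exp (-t))) hp
  rw [(hasDerivAt_Gamma_integral (one_div_pos.2 hp)).deriv, ← hsubst,
    eq_div_iff (pow_pos hp 2).ne', ← MeasureTheory.integral_mul_const]
  refine setIntegral_congr_fun measurableSet_Ioi fun x (hx : 0 < x) => ?_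
  have hpow : x ^ (p - 1) * (x ^ p) ^ (1 / p - 1) = 1 := by
    rw [← rpow_mul hx.le, ← rpow_add hx, mul_sub, mul_one_div_cancel hp.ne']
    simp
  simp only [smul_eq_mul, log_rpow hx]
  linear_combination (-(exp (-x ^ p) * log x * p ^ 2)) * hpow

lemma integral_exp_neg_sq_mul_log :
    ∫ x in Set.Ioi 0, exp (-x ^ 2) * log x =
      -(√π / 4) * (eulerMascheroniConstant + 2 * log 2) := by
  have h := integral_exp_neg_rpow_mul_log two_pos
  simp only [rpow_two, hasDerivAt_Gamma_one_half.deriv] at h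
  rw [h]
  ring

lemma integrableOn_exp_neg_sq_mul_log :
    IntegrableOn (fun x => exp (-x ^ 2) * log x) (Set.Ioi 0) := by
  -- The Bochner integral of a non-integrable function is `0`, and this one is negative.
  refine not_imp_comm.1 integral_undef ?_
  rw [integral_exp_neg_sq_mul_log]
  have hγ := one_half_lt_eulerMascheroniConstant
  have : 0 < √π / 4 * (eulerMascheroniConstant + 2 * log 2) := by
    have := log_pos one_lt_two
    positivity
  linarith

end GaussianLogMoment

section GaussianTail

lemma integrable_exp_neg_sq : Integrable fun x : ℝ => exp (-x ^ 2) := by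
  simpa using integrable_exp_neg_mul_sq one_pos

lemma integrable_mul_exp_neg_sq : Integrable fun x : ℝ => x * exp (-x ^ 2) := by
  simpa using integrable_mul_exp_neg_mul_sq one_pos

lemma integral_Ioi_exp_neg_sq : ∫ x in Set.Ioi (0 : ℝ), exp (-x ^ 2) = √π / 2 := by
  simpa using integral_gaussian_Ioi 1

lemma integral_Ioi_mul_exp_neg_sq (A : ℝ) :
    ∫ x in Set.Ioi A, x * exp (-x ^ 2) = exp (-A ^ 2) / 2 := by
  have hderiv (x : ℝ) : HasDerivAt (fun x => -exp (-x ^ 2) / 2) (x * exp (-x ^ 2)) x := by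
    convert! ((hasDerivAt_pow 2 x).neg.exp.neg).div_const 2 using 1
    simp only [Pi.neg_apply]
    ring
  have hlim : Filter.Tendsto (fun x : ℝ => -exp (-x ^ 2) / 2) Filter.atTop (nhds 0) := by
    simpa using (tendsto_exp_neg_atTop_nhds_zero.comp
      (Filter.tendsto_pow_atTop two_ne_zero)).neg.div_const 2
  rw [integral_Ioi_of_hasDerivAt_of_tendsto' (fun x _ => hderiv x)
    integrable_mul_exp_neg_sq.integrableOn hlim]
  ring

lemma abs_integral_Ioi_exp_neg_sq_mul_le {A K : ℝ} {h : ℝ → ℝ} (hh : ∀ x > A, |h x| ≤ K * x) :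
    |∫ x in Set.Ioi A, exp (-x ^ 2) * h x| ≤ K * exp (-A ^ 2) / 2 := by
  rw [mul_div_assoc, ← integral_Ioi_mul_exp_neg_sq, ← MeasureTheory.integral_const_mul,
    ← norm_eq_abs]
  refine norm_integral_le_of_norm_le (integrable_mul_exp_neg_sq.const_mul K).integrableOn
    (ae_restrict_of_forall_mem measurableSet_Ioi fun x hx => ?_)
  rw [norm_mul, norm_of_nonneg (exp_pos _).le, norm_eq_abs]
  calc exp (-x ^ 2) * |h x| ≤ exp (-x ^ 2) * (K * x) := by gcongr; exact hh x hx
    _ = K * (x * exp (-x ^ 2)) := by ring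

lemma abs_two_div_sqrt_pi_mul_integral_Ioi_le {A : ℝ} (hA : 0 < A) {h : ℝ → ℝ}
    (hh : ∀ x > A, |h x| ≤ x / A) :
    |2 / √π * ∫ x in Set.Ioi A, exp (-x ^ 2) * h x| ≤ exp (-A ^ 2) / (√π * A) := by
  have htail : |∫ x in Set.Ioi A, exp (-x ^ 2) * h x| ≤ A⁻¹ * exp (-A ^ 2) / 2 :=
    abs_integral_Ioi_exp_neg_sq_mul_le fun x hx => (hh x hx).trans_eq (div_eq_inv_mul x A)
  rw [abs_mul, abs_of_pos (by positivity : 0 < 2 / √π)]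
  calc 2 / √π * |∫ x in Set.Ioi A, exp (-x ^ 2) * h x|
      ≤ 2 / √π * (A⁻¹ * exp (-A ^ 2) / 2) := by gcongr
    _ = exp (-A ^ 2) / (√π * A) := by field_simp

end GaussianTail

/-- The error function, through which the heat content is expressed:
`u(r, t) = erf (r / (2√t))`. -/
noncomputable def erf (x : ℝ) : ℝ := 2 / √π * ∫ v in (0 : ℝ)..x, exp (-v ^ 2)

lemma continuous_erf : Continuous erf :=
  continuous_const.mul <|
    continuous_primitive (fun _ _ => integrable_exp_neg_sq.intervalIntegrable) 0

lemma erf_sub_one (x : ℝ) : erf x - 1 = -(2 / √π * ∫ v in Set.Ioi x, exp (-v ^ 2)) := by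
  have hsplit := integral_interval_add_Ioi (a := 0) (b := x) integrable_exp_neg_sq.integrableOn
    integrable_exp_neg_sq.integrableOn
  rw [integral_Ioi_exp_neg_sq] at hsplit
  have hπ : 2 / √π * (√π / 2) = 1 := by field_simp
  rw [erf]
  linear_combination 2 / √π * hsplit + hπ

lemma abs_erf_sub_one_le {x : ℝ} (hx : 0 < x) : |erf x - 1| ≤ exp (-x ^ 2) / (√π * x) := by
  rw [erf_sub_one, abs_neg]
  simpa using abs_two_div_sqrt_pi_mul_integral_Ioi_le hx (h := 1) fun y hy => by
    simpa using (one_le_div hx).2 hy.le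

lemma intervalIntegrable_erf_div (a b : ℝ) :
    IntervalIntegrable (fun x => erf x / x) volume a b := by
  simp only [erf, mul_div_assoc]
  exact (intervalIntegrable_primitive_div (by fun_prop) a b).const_mul _

lemma integral_erf_div {A : ℝ} (hA : 0 ≤ A) :
    ∫ x in (0 : ℝ)..A, erf x / x = log A + eulerMascheroniConstant / 2 + log 2 +
      2 / √π * ∫ x in Set.Ioi A, exp (-x ^ 2) * (log x - log A) := by
  simp only [erf, mul_div_assoc]
  rw [intervalIntegral.integral_const_mul, integral_primitive_div_eq_add_integral_Ioi (by fun_prop)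
    integrable_exp_neg_sq.integrableOn integrableOn_exp_neg_sq_mul_log hA,
    integral_Ioi_exp_neg_sq, integral_exp_neg_sq_mul_log]
  field_simp
  ring

lemma abs_integral_erf_div_sub_le {A : ℝ} (hA : 0 < A) :
    |(∫ x in (0 : ℝ)..A, erf x / x) - (log A + eulerMascheroniConstant / 2 + log 2)| ≤
      exp (-A ^ 2) / (√π * A) := by
  rw [integral_erf_div hA.le, add_sub_cancel_left]
  refine abs_two_div_sqrt_pi_mul_integral_Ioi_le hA fun x hx => ?_
  rw [abs_of_nonneg (sub_nonneg.2 (log_le_log hA hx.le)), ← log_div (hA.trans hx).ne' hA.ne']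
  exact log_le_self (div_pos (hA.trans hx) hA).le

section Scaling

variable {s ε : ℝ}

lemma intervalIntegrable_comp_div_div {f : ℝ → ℝ} {a b : ℝ} (hs : s ≠ 0)
    (hf : IntervalIntegrable (fun x => f x / x) volume (a / s) (b / s)) :
    IntervalIntegrable (fun r => f (r / s) / r) volume a b := by
  have h := (hf.comp_mul_right (c := s⁻¹)).const_mul s⁻¹
  rw [div_inv_eq_mul, div_inv_eq_mul, div_mul_cancel₀ a hs, div_mul_cancel₀ b hs] at h
  refine h.congr fun r _ => ?_
  field_simp

lemma integral_comp_div_div (f : ℝ → ℝ) (hs : s ≠ 0) (a b : ℝ) :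
    ∫ r in a..b, f (r / s) / r = ∫ x in a / s..b / s, f x / x := by
  rw [← inv_smul_integral_comp_div, smul_eq_mul, ← intervalIntegral.integral_const_mul]
  congr with r
  field_simp

lemma abs_integral_erf_div_scale_sub_le (hs : 0 < s) (hε : 0 < ε) :
    |(∫ r in (0 : ℝ)..ε, erf (r / s) / r) -
        (log (ε / s) + eulerMascheroniConstant / 2 + log 2)| ≤
      exp (-(ε / s) ^ 2) / (√π * (ε / s)) := by
  rw [integral_comp_div_div erf hs.ne', zero_div]
  exact abs_integral_erf_div_sub_le (div_pos hε hs)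

lemma abs_erf_div_sub_one_le (hs : 0 < s) (hε : 0 < ε) {r : ℝ} (hr : ε ≤ r) :
    |erf (r / s) - 1| ≤ exp (-(ε / s) ^ 2) / (√π * (ε / s)) :=
  (abs_erf_sub_one_le (div_pos (hε.trans_le hr) hs)).trans (by gcongr)

variable {S : Set ℝ} {f : ℝ → ℝ}

lemma integrableOn_erf_div_mul (hs : 0 < s) (hε : 0 < ε) (hS : MeasurableSet S)
    (hSε : S ⊆ Set.Ici ε) (hf : IntegrableOn f S) :
    IntegrableOn (fun r => erf (r / s) * f r) S := by
  have hdiff : IntegrableOn (fun r => (erf (r / s) - 1) * f r) S :=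
    hf.bdd_mul ((continuous_erf.comp (continuous_id.div_const s)).sub
      continuous_const).aestronglyMeasurable
      (ae_restrict_of_forall_mem hS fun r hr => abs_erf_div_sub_one_le hs hε (hSε hr))
  refine (hdiff.add hf).congr (.of_forall fun r => ?_)
  simp only [Pi.add_apply]
  ring

lemma abs_setIntegral_erf_div_mul_sub_le (hs : 0 < s) (hε : 0 < ε) (hS : MeasurableSet S)
    (hSε : S ⊆ Set.Ici ε) (hf : IntegrableOn f S) :
    |(∫ r in S, erf (r / s) * f r) - ∫ r in S, f r| ≤
      exp (-(ε / s) ^ 2) / (√π * (ε / s)) * ∫ r in S, |f r| := by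
  rw [← MeasureTheory.integral_sub (integrableOn_erf_div_mul hs hε hS hSε hf) hf,
    ← MeasureTheory.integral_const_mul, ← norm_eq_abs]
  refine norm_integral_le_of_norm_le (hf.abs.const_mul _)
    (ae_restrict_of_forall_mem hS fun r hr => ?_)
  rw [← sub_one_mul, norm_mul]
  exact mul_le_mul_of_nonneg_right (abs_erf_div_sub_one_le hs hε (hSε hr)) (abs_nonneg _)

end Scaling

section HeatContent

variable {Θ : ℝ → ℝ} {s ε R : ℝ}

lemma integral_erf_div_mul_eq_add (hs : 0 < s) (hε : 0 < ε) (hεR : ε < R)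
    (hΘ : IntegrableOn (fun r => Θ r * r⁻¹) (Set.Ioo ε R)) (hΘ1 : ∀ r, 0 < r → r ≤ ε → Θ r = 1) :
    ∫ r in Set.Ioo 0 R, erf (r / s) * (Θ r * r⁻¹) =
      (∫ r in (0 : ℝ)..ε, erf (r / s) / r) +
        ∫ r in Set.Ioo ε R, erf (r / s) * (Θ r * r⁻¹) := by
  have hinner : Set.EqOn (fun r => erf (r / s) * (Θ r * r⁻¹)) (fun r => erf (r / s) / r)
      (Set.Ioc 0 ε) := fun r hr => by
    simp only [hΘ1 r hr.1 hr.2, one_mul, div_eq_mul_inv]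
  rw [← Set.Ioc_union_Ioo_eq_Ioo hε.le hεR, setIntegral_union
    (Set.disjoint_left.2 fun r hr hr' => hr.2.not_gt hr'.1) measurableSet_Ioo
    ((intervalIntegrable_comp_div_div hs.ne' (intervalIntegrable_erf_div _ _)).1.congr_fun
      hinner.symm measurableSet_Ioc)
    (integrableOn_erf_div_mul hs hε measurableSet_Ioo
      (Set.Ioo_subset_Ioi_self.trans Set.Ioi_subset_Ici_self) hΘ),
    setIntegral_congr_fun measurableSet_Ioc hinner, intervalIntegral.integral_of_le hε.le]

lemma abs_integral_erf_div_mul_sub_le (hs : 0 < s) (hε : 0 < ε) (hεR : ε < R)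
    (hΘ : IntegrableOn (fun r => Θ r * r⁻¹) (Set.Ioo ε R)) (hΘ1 : ∀ r, 0 < r → r ≤ ε → Θ r = 1) :
    |(∫ r in Set.Ioo 0 R, erf (r / s) * (Θ r * r⁻¹)) -
        (log (ε / s) + eulerMascheroniConstant / 2 + log 2 + ∫ r in Set.Ioo ε R, Θ r * r⁻¹)| ≤
      exp (-(ε / s) ^ 2) / (√π * (ε / s)) * (1 + ∫ r in Set.Ioo ε R, |Θ r * r⁻¹|) := by
  rw [integral_erf_div_mul_eq_add hs hε hεR hΘ hΘ1, add_sub_add_comm, mul_one_add]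
  exact (abs_add_le _ _).trans (add_le_add (abs_integral_erf_div_scale_sub_le hs hε)
    (abs_setIntegral_erf_div_mul_sub_le hs hε measurableSet_Ioo
      (Set.Ioo_subset_Ioi_self.trans Set.Ioi_subset_Ici_self) hΘ))

lemma integrableOn_mul_inv_Ioo (hε : 0 < ε) (hΘ : ContinuousOn Θ (Set.Icc ε R)) :
    IntegrableOn (fun r => Θ r * r⁻¹) (Set.Ioo ε R) :=
  ((hΘ.mul (continuousOn_inv₀.mono fun _ hr => (hε.trans_le hr.1).ne')).integrableOn_Icc).mono_set
    Set.Ioo_subset_Icc_self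

lemma sqrt_mul_exp_neg_div_le {a b c t : ℝ} (ha : 0 ≤ a) (hb : 0 < b) (hbc : b ≤ c) (ht : 0 < t)
    (ht1 : t ≤ 1) : √t * exp (-a / (b * t)) ≤ exp (-a / (c * t)) :=
  calc √t * exp (-a / (b * t)) ≤ exp (-a / (b * t)) :=
        mul_le_of_le_one_left (exp_pos _).le (sqrt_le_one.2 ht1)
    _ ≤ exp (-a / (c * t)) := by
        simp only [neg_div]
        gcongr

end HeatContent

theorem stmt_15_general (u : ℝ → ℝ → ℝ)
    (hu : ∀ r t : ℝ, 0 ≤ r → 0 < t →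
      u r t = (2 / Real.sqrt π) * ∫ v in (0 : ℝ)..(r / (2 * Real.sqrt t)), Real.exp (-v ^ 2))
    {ε R : ℝ} (hε : 0 < ε) (hεR : ε < R) {Θ : ℝ → ℝ}
    (hΘ : IntegrableOn (fun r => Θ r * r⁻¹) (Set.Ioo ε R))
    (hΘ1 : ∀ r : ℝ, 0 < r → r ≤ ε → Θ r = 1) {t : ℝ} (ht : 0 < t) :
    |(∫ r in Set.Ioo (0 : ℝ) R, u r t * Θ r * r⁻¹) -
        (Real.log ε + (∫ r in Set.Ioo ε R, Θ r * r⁻¹) +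
          Real.eulerMascheroniConstant / 2 - (1 / 2) * Real.log t)|
      ≤ 2 / (√π * ε) * (1 + ∫ r in Set.Ioo ε R, |Θ r * r⁻¹|) * √t *
        Real.exp (-ε ^ 2 / (4 * t)) := by
  have hu_erf : ∫ r in Set.Ioo (0 : ℝ) R, u r t * Θ r * r⁻¹ =
      ∫ r in Set.Ioo (0 : ℝ) R, erf (r / (2 * √t)) * (Θ r * r⁻¹) :=
    setIntegral_congr_fun measurableSet_Ioo fun r hr => by
      simp only [hu r t hr.1.le ht, erf, mul_assoc]
  have hlog : log (ε / (2 * √t)) = log ε - log 2 - 1 / 2 * log t := by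
    rw [log_div hε.ne' (by positivity), log_mul two_ne_zero (by positivity), log_sqrt ht.le]
    ring
  have hexp : -(ε / (2 * √t)) ^ 2 = -ε ^ 2 / (4 * t) := by
    rw [div_pow, mul_pow, sq_sqrt ht.le]
    ring
  have h := abs_integral_erf_div_mul_sub_le (s := 2 * √t) (by positivity) hε hεR hΘ hΘ1
  rw [hlog, hexp] at h
  rw [hu_erf]
  convert h using 1
  · congr 1
    ring
  · field_simp

/-- Small-time asymptotics of the half-line heat content with singular density `Θ(r) r^{-1}`
(the borderline case `α = 1`): a logarithmic term `-(1/2) ln t` appears. -/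
theorem stmt_15 (u : ℝ → ℝ → ℝ)
    (hu : ∀ r t : ℝ, 0 ≤ r → 0 < t →
      u r t = (2 / Real.sqrt π) * ∫ v in (0 : ℝ)..(r / (2 * Real.sqrt t)), Real.exp (-v ^ 2))
    (ε : ℝ) (hε0 : 0 < ε) (hε1 : ε < 1)
    (Θ : ℝ → ℝ) (hΘ : ContDiff ℝ (⊤ : ℕ∞) Θ)
    (hΘ1 : ∀ r : ℝ, 0 ≤ r → r ≤ ε → Θ r = 1)
    (hΘ0 : ∀ r : ℝ, 1 ≤ r → Θ r = 0) :
    ∃ C t₀ : ℝ, 0 < C ∧ 0 < t₀ ∧ ∀ t : ℝ, 0 < t → t < t₀ →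
      |(∫ r in Set.Ioo (0 : ℝ) 1, u r t * Θ r * r⁻¹) -
          (Real.log ε + (∫ r in Set.Ioo ε 1, Θ r * r⁻¹) +
            Real.eulerMascheroniConstant / 2 - (1 / 2) * Real.log t)|
        ≤ C * Real.exp (-ε ^ 2 / (8 * t)) := by
  have hint := integrableOn_mul_inv_Ioo hε0 (hΘ.continuous.continuousOn (s := Set.Icc ε 1))
  refine ⟨2 / (√π * ε) * (1 + ∫ r in Set.Ioo ε 1, |Θ r * r⁻¹|), 1, by positivity, one_pos,
    fun t ht ht1 => (stmt_15_general u hu hε0 hε1 hint (fun r hr => hΘ1 r hr.le) ht).trans ?_⟩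
  rw [mul_assoc]
  gcongr
  exact sqrt_mul_exp_neg_div_le (sq_nonneg ε) four_pos (by norm_num) ht ht1.le
end

section
/- Let α ∈ ℂ with Re(α) < 2 and α ≠ 1, and let g : [0,∞) → ℂ be continuously differentiable with compact support. Then the limit as ε → 0⁺ of ∫_ε^∞ g(r) r^{−α} dr − g(0)·ε^{1−α}/(α−1) exists and equals g(0)/(1−α) + ∫₀^∞ (g(r) − g(0)·𝟙_{[0,1]}(r)) r^{−α} dr. -/
open MeasureTheory Real Filter

/-!
Subtracting from `g` the constant `c` on `[0, b]`, where `g - c = O(r^p)` at `0`, leaves a function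
whose Mellin integral at `s = 1 - α` converges, so its integral over `(ε, ∞)` has a limit as
`ε → 0⁺`. The subtracted part is explicit, `∫_ε^b c r^(s-1) dr = c (b^s - ε^s) / s`: the term in
`ε` is the counterterm and the term in `b` is the constant in the limit.
-/

section

open Set Asymptotics
open scoped Topology

variable {E : Type*} [NormedAddCommGroup E]

lemma isBigO_atTop_of_hasCompactSupport {F : Type*} [Norm F] {g : ℝ → E} (hg : HasCompactSupport g)
    (f : ℝ → F) : g =O[atTop] f := by
  rw [hasCompactSupport_iff_eventuallyEq, coclosedCompact_eq_cocompact] at hg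
  exact hg.trans_isBigO (isBigO_zero _ _) |>.mono atTop_le_cocompact

variable [NormedSpace ℂ E] {g : ℝ → E} {c : E} {s z : ℂ}
  {b ε : ℝ}

lemma continuousOn_ofReal_cpow_const_Ioi (z : ℂ) :
    ContinuousOn (fun r : ℝ => (r : ℂ) ^ z) (Ioi 0) := fun r hr =>
  (Complex.continuousAt_ofReal_cpow_const r z (Or.inr (ne_of_gt hr))).continuousWithinAt

lemma cpow_smul_indicator_Icc_eqOn (hε : 0 < ε) :
    EqOn (fun r : ℝ => (r : ℂ) ^ z • (Icc 0 b).indicator (fun _ => c) r)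
      ((Ioc ε b).indicator fun r : ℝ => (r : ℂ) ^ z • c) (Ioi ε) := by
  intro r (hr : ε < r)
  by_cases hrb : r ≤ b
  · simp [hr, hrb, (hε.trans hr).le]
  · simp [hrb]

lemma integrableOn_Ioi_cpow_smul_indicator_Icc (hε : 0 < ε) :
    IntegrableOn (fun r : ℝ => (r : ℂ) ^ z • (Icc 0 b).indicator (fun _ => c) r) (Ioi ε) := by
  have hIcc : IntegrableOn (fun r : ℝ => (r : ℂ) ^ z • c) (Icc ε b) :=
    (((continuousOn_ofReal_cpow_const_Ioi z).mono fun _ hr => hε.trans_le hr.1).smul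
      continuousOn_const).integrableOn_Icc
  refine IntegrableOn.congr_fun ?_ (cpow_smul_indicator_Icc_eqOn hε).symm measurableSet_Ioi
  exact ((hIcc.mono_set Ioc_subset_Icc_self).integrable_indicator measurableSet_Ioc).integrableOn

lemma setIntegral_Ioi_cpow_smul_indicator_Icc [CompleteSpace E] (hz : z ≠ -1) (hε : 0 < ε)
    (hεb : ε ≤ b) :
    ∫ r in Ioi ε, (r : ℂ) ^ z • (Icc 0 b).indicator (fun _ => c) r =
      (((b : ℂ) ^ (z + 1) - (ε : ℂ) ^ (z + 1)) / (z + 1)) • c := by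
  have hzero : (0 : ℝ) ∉ uIcc ε b := by
    rw [uIcc_of_le hεb]
    exact fun h => hε.not_ge h.1
  calc ∫ r in Ioi ε, (r : ℂ) ^ z • (Icc 0 b).indicator (fun _ => c) r
      = ∫ r in Ioi ε, (Ioc ε b).indicator (fun r : ℝ => (r : ℂ) ^ z • c) r :=
        setIntegral_congr_fun measurableSet_Ioi (cpow_smul_indicator_Icc_eqOn hε)
    _ = ∫ r in ε..b, (r : ℂ) ^ z • c := by
        rw [setIntegral_indicator measurableSet_Ioc, inter_eq_right.2 Ioc_subset_Ioi_self,
          intervalIntegral.integral_of_le hεb]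
    _ = _ := by
        rw [intervalIntegral.integral_smul_const, integral_cpow (Or.inr ⟨hz, hzero⟩)]

lemma tendsto_setIntegral_Ioi_nhdsGT {f : ℝ → E} {a : ℝ} (hf : IntegrableOn f (Ioi a)) :
    Tendsto (fun x => ∫ r in Ioi x, f r) (𝓝[>] a) (𝓝 (∫ r in Ioi a, f r)) := by
  have hid : Tendsto (fun x : ℝ => x) (𝓝[>] a) (𝓝 a) := nhdsWithin_le_nhds
  refine ((aecover_Ioi_of_Ioi (μ := volume) hid).integral_tendsto_of_countably_generated
    hf).congr' ?_
  filter_upwards [self_mem_nhdsWithin] with x hx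
  rw [Measure.restrict_restrict measurableSet_Ioi,
    inter_eq_left.2 (Ioi_subset_Ioi (le_of_lt hx))]

lemma tendsto_setIntegral_Ioi_add_cpow_smul_of_mellinConvergent [CompleteSpace E]
    (hb : 0 < b) (hs : s ≠ 0)
    (hconv : MellinConvergent (g - (Icc 0 b).indicator fun _ => c) s) :
    Tendsto (fun ε : ℝ => (∫ r in Ioi ε, (r : ℂ) ^ (s - 1) • g r) + ((ε : ℂ) ^ s / s) • c)
      (𝓝[>] 0) (𝓝 (((b : ℂ) ^ s / s) • c + mellin (g - (Icc 0 b).indicator fun _ => c) s)) := by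
  refine ((tendsto_setIntegral_Ioi_nhdsGT hconv).const_add _).congr' ?_
  filter_upwards [Ioc_mem_nhdsGT hb] with ε ⟨hε, hεb⟩
  have hsplit : ∫ r in Ioi ε, (r : ℂ) ^ (s - 1) • g r =
      (∫ r in Ioi ε, (r : ℂ) ^ (s - 1) • (g - (Icc 0 b).indicator fun _ => c) r) +
        ∫ r in Ioi ε, (r : ℂ) ^ (s - 1) • (Icc 0 b).indicator (fun _ => c) r := by
    rw [← integral_add (hconv.mono_set (Ioi_subset_Ioi hε.le))
      (integrableOn_Ioi_cpow_smul_indicator_Icc hε)]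
    simp only [Pi.sub_apply, ← smul_add, sub_add_cancel]
  have hs1 : s - 1 ≠ -1 := fun h => hs (by simpa using h)
  rw [hsplit, setIntegral_Ioi_cpow_smul_indicator_Icc hs1 hε hεb, sub_add_cancel, sub_div,
    sub_smul]
  abel

lemma mellinConvergent_sub_indicator_Icc_of_isBigO_rpow {p q : ℝ} (hb : 0 < b)
    (hloc : LocallyIntegrableOn g (Ioi 0)) (htop : g =O[atTop] fun r => r ^ (-q))
    (hq : s.re < q) (hzero : (fun r => g r - c) =O[𝓝[>] 0] fun r => r ^ p) (hp : -p < s.re) :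
    MellinConvergent (g - (Icc 0 b).indicator fun _ => c) s := by
  refine mellinConvergent_of_isBigO_rpow (a := q) (b := -p) ?_ ?_ hq ?_ hp
  · exact hloc.sub <|
      ((locallyIntegrable_const c).indicator measurableSet_Icc).locallyIntegrableOn _
  · refine htop.congr' ?_ .rfl
    filter_upwards [eventually_gt_atTop b] with r hr
    simp [hr]
  · rw [neg_neg]
    refine hzero.congr' ?_ .rfl
    filter_upwards [Ioc_mem_nhdsGT hb] with r hr
    simp [hr.1.le, hr.2]

theorem stmt_16_general [CompleteSpace E] {α : ℂ} {p q : ℝ} (hα1 : α ≠ 1)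
    (hloc : LocallyIntegrableOn g (Ioi 0)) (htop : g =O[atTop] fun r => r ^ (-q))
    (hq : 1 - α.re < q) (hzero : (fun r => g r - c) =O[𝓝[>] 0] fun r => r ^ p)
    (hp : α.re < 1 + p) :
    Tendsto
      (fun ε : ℝ => (∫ r in Ioi ε, (r : ℂ) ^ (-α) • g r) -
        (Complex.exp ((1 - α) * (Real.log ε : ℂ)) / (α - 1)) • c)
      (𝓝[>] 0)
      (𝓝 ((1 / (1 - α)) • c +
        ∫ r in Ioi (0 : ℝ), (r : ℂ) ^ (-α) • (g r - (Icc 0 1).indicator (fun _ => c) r))) := by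
  have hconv : MellinConvergent (g - (Icc 0 1).indicator fun _ => c) (1 - α) :=
    mellinConvergent_sub_indicator_Icc_of_isBigO_rpow one_pos hloc htop (by simpa using hq) hzero
      (by simp only [Complex.sub_re, Complex.one_re]; linarith)
  have hlim := tendsto_setIntegral_Ioi_add_cpow_smul_of_mellinConvergent one_pos
    (sub_ne_zero.2 hα1.symm) hconv
  simp only [mellin, Pi.sub_apply, sub_sub_cancel_left, Complex.ofReal_one,
    Complex.one_cpow] at hlim
  refine hlim.congr' ?_
  filter_upwards [self_mem_nhdsWithin] with ε (hε : 0 < ε)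
  rw [Complex.cpow_def_of_ne_zero (Complex.ofReal_ne_zero.2 hε.ne'), ← Complex.ofReal_log hε.le,
    mul_comm (Complex.ofReal _), ← neg_sub α 1, div_neg, neg_smul, ← sub_eq_add_neg]

end

/-- The regularized integral `I_Reg` for a density with `r^{-α}` blowup, `Re α < 2`, `α ≠ 1`:
`lim_{ε→0⁺} (∫_ε^∞ g(r) r^{-α} dr - g(0) ε^{1-α}/(α-1))
   = g(0)/(1-α) + ∫₀^∞ (g(r) - g(0) 𝟙_{[0,1]}(r)) r^{-α} dr`. -/
theorem stmt_16 (α : ℂ) (hα : α.re < 2) (hα1 : α ≠ 1)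
    (g : ℝ → ℂ) (hg : ContDiff ℝ 1 g) (hgsupp : HasCompactSupport g) :
    Filter.Tendsto
      (fun ε : ℝ =>
        (∫ r in Set.Ioi ε, g r * (r : ℂ) ^ (-α)) -
          g 0 * Complex.exp ((1 - α) * (Real.log ε : ℂ)) / (α - 1))
      (nhdsWithin 0 (Set.Ioi 0))
      (nhds (g 0 / (1 - α) +
        ∫ r in Set.Ioi (0 : ℝ),
          (g r - g 0 * (Set.Icc (0 : ℝ) 1).indicator (fun _ => (1 : ℂ)) r) *
            (r : ℂ) ^ (-α))) := by
  have hzero : (fun r => g r - g 0) =O[nhdsWithin 0 (Set.Ioi 0)] fun r : ℝ => r ^ (1 : ℝ) := by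
    simpa only [sub_zero, Real.rpow_one] using
      (hg.differentiable one_ne_zero 0).isBigO_sub.mono nhdsWithin_le_nhds
  have hlim := stmt_16_general hα1 (hg.continuous.locallyIntegrable.locallyIntegrableOn _)
    (isBigO_atTop_of_hasCompactSupport hgsupp _) (lt_add_one _) hzero (by linarith)
  simpa only [Set.indicator_apply, smul_eq_mul, mul_ite, mul_one, mul_zero, zero_mul, mul_comm,
    mul_div_assoc, div_mul_eq_mul_div, one_mul] using hlim
end
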